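/- arXiv:2009.11855 — 2 statements merged into one kernel-verified Lean document; each statement's English description precedes it below -/
import Mathlib

section
/- Assume y_0 ≥ 0 and that there exists no nonnegative finite Borel measure on 𝕋 that is feasible. Then (BPC) has a unique solution w*, and w* is of the form w* = Σ_{i=1}^N a_i δ_{x_i} with 1 ≤ N ≤ 2K_c, pairwise distinct x_i ∈ 𝕋, nonzero real weights a_i, at least one a_i > 0 and at least one a_j < 0. -/
open MeasureTheory Complex Real Matrix
open scoped Real ComplexOrder

noncomputable section

instance : Fact (0 < 2 * π) := ⟨by positivity⟩

/-- The circle `𝕋 = ℝ/2πℤ`. -/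
abbrev Circle2pi := AddCircle (2 * π)

/-- The `k`-th Fourier coefficient of a finite signed Borel measure `w` on `𝕋`:
`ŵ[k] = ∫ e^{-ikt} dw⁺(t) - ∫ e^{-ikt} dw⁻(t)`, where `w = w⁺ - w⁻` is the Jordan
decomposition. -/
noncomputable def sFourierCoeff (w : MeasureTheory.SignedMeasure Circle2pi) (k : ℤ) : ℂ :=
  (∫ t, fourier (-k) t ∂w.toJordanDecomposition.posPart)
    - ∫ t, fourier (-k) t ∂w.toJordanDecomposition.negPart

/-- The total variation norm `‖w‖ = w⁺(𝕋) + w⁻(𝕋)`. -/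
noncomputable def tvNorm (w : MeasureTheory.SignedMeasure Circle2pi) : ℝ :=
  (w.totalVariation Set.univ).toReal

/-- `w` is feasible for the data `y` : `ŵ[k] = y k` for all `|k| ≤ K_c`. -/
def Feasible (Kc : ℕ) (y : ℤ → ℂ) (w : MeasureTheory.SignedMeasure Circle2pi) : Prop :=
  ∀ k : ℤ, |k| ≤ (Kc : ℤ) → sFourierCoeff w k = y k

/-- `w` is a solution of the problem (BPC): it is feasible and minimizes the total
variation norm among feasible measures. -/
def IsBPCSolution (Kc : ℕ) (y : ℤ → ℂ) (w : MeasureTheory.SignedMeasure Circle2pi) : Prop :=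
  Feasible Kc y w ∧ ∀ v : MeasureTheory.SignedMeasure Circle2pi, Feasible Kc y v →
    tvNorm w ≤ tvNorm v

/-- The Dirac measure at `x ∈ 𝕋`, viewed as a signed measure. -/
noncomputable def diracSM (x : Circle2pi) : MeasureTheory.SignedMeasure Circle2pi :=
  (MeasureTheory.Measure.dirac x).toSignedMeasure


theorem Continuous.integrable_of_compactSpace {X E : Type*} [TopologicalSpace X]
    [CompactSpace X] [MeasurableSpace X] [OpensMeasurableSpace X] [NormedAddCommGroup E]
    [SecondCountableTopologyEither X E] {f : X → E} (hf : Continuous f)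
    (μ : Measure X) [IsFiniteMeasure μ] : Integrable f μ :=
  hf.integrable_of_hasCompactSupport (HasCompactSupport.of_compactSpace _)

theorem exists_probabilityMeasure_integral_eq {Y : Type*} [TopologicalSpace Y] [CompactSpace Y]
    [T2Space Y] [MeasurableSpace Y] [BorelSpace Y] {ι : Type*} [Fintype ι]
    (h : ι → C(Y, ℝ)) (v : ι → ℝ)
    (hv : ∀ (c : ι → ℝ) (u : ℝ), (∀ y, ∑ i, c i * h i y ≤ u) → ∑ i, c i * v i ≤ u) :
    ∃ μ : ProbabilityMeasure Y, ∀ i, ∫ y, h i y ∂(μ : Measure Y) = v i := by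
  classical
  set Φ : ProbabilityMeasure Y → ι → ℝ := fun μ i => ∫ y, h i y ∂(μ : Measure Y) with hΦ
  have hint : ∀ (μ : Measure Y) [IsFiniteMeasure μ] (i : ι), Integrable (h i) μ := fun μ _ i =>
    (h i).continuous.integrable_of_compactSpace μ
  have hcont : Continuous Φ := continuous_pi fun i =>
    ProbabilityMeasure.continuous_integral_continuousMap (h i)
  have hclosed : IsClosed (Set.range Φ) := (isCompact_range hcont).isClosed
  have hconv : Convex ℝ (Set.range Φ) := by
    rintro _ ⟨μ, rfl⟩ _ ⟨ν, rfl⟩ a b ha hb hab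
    lift a to NNReal using ha
    lift b to NNReal using hb
    have hab' : a + b = 1 := by exact_mod_cast hab
    have hp : IsProbabilityMeasure (a • (μ : Measure Y) + b • (ν : Measure Y)) := by
      constructor
      have : (a : ENNReal) + b = 1 := by exact_mod_cast hab'
      rw [Measure.add_apply, Measure.smul_apply, Measure.smul_apply, measure_univ, measure_univ,
        ENNReal.smul_def, ENNReal.smul_def, smul_eq_mul, smul_eq_mul, mul_one, mul_one, this]
    refine ⟨⟨_, hp⟩, ?_⟩
    funext i
    simp only [hΦ, ProbabilityMeasure.coe_mk, Pi.add_apply, Pi.smul_apply]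
    rw [integral_add_measure (hint _ i) (hint _ i), integral_smul_nnreal_measure,
      integral_smul_nnreal_measure]
    rfl
  by_contra hne
  have hnot : v ∉ Set.range Φ := fun ⟨μ, hμ⟩ => hne ⟨μ, fun i => congrFun hμ i⟩
  obtain ⟨f, u, hu, huv⟩ := geometric_hahn_banach_closed_point hconv hclosed hnot
  have hf : ∀ z : ι → ℝ, f z = ∑ i, f (Pi.single i 1) * z i := by
    intro z
    conv_lhs => rw [pi_eq_sum_univ' z]
    simp [map_sum, mul_comm]
  refine absurd (hv (fun i => f (Pi.single i 1)) u fun y => ?_) ?_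
  · have := hu (Φ ⟨Measure.dirac y, inferInstance⟩) ⟨_, rfl⟩
    rw [hf] at this
    simp only [hΦ, ProbabilityMeasure.coe_mk, integral_dirac] at this
    exact this.le
  · rw [← hf]
    exact not_le.2 huv

theorem exists_dual_certificate {X : Type*} [TopologicalSpace X] [CompactSpace X]
    [T2Space X] [Nonempty X] [SecondCountableTopology X] [MeasurableSpace X] [BorelSpace X]
    {ι : Type*} [Fintype ι]
    (g : ι → C(X, ℝ)) (L : C(X, ℝ) →ₗ[ℝ] ℝ) :
    ∃ p ∈ Submodule.span ℝ (Set.range g), (∀ x, |p x| ≤ 1) ∧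
      ∃ (μ ν : Measure X) (_ : IsFiniteMeasure μ) (_ : IsFiniteMeasure ν),
        μ.real Set.univ + ν.real Set.univ ≤ L p ∧
        ∀ i, ∫ x, g i x ∂μ - ∫ x, g i x ∂ν = L (g i) := by
  set V := Submodule.span ℝ (Set.range g)
  have hfd : FiniteDimensional ℝ V := FiniteDimensional.span_of_finite ℝ (Set.finite_range g)
  have : ProperSpace V := FiniteDimensional.proper ℝ V
  set ℓ : V →ₗ[ℝ] ℝ := L.comp V.subtype with hℓ
  have hℓc : Continuous ℓ := LinearMap.continuous_of_finiteDimensional ℓ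
  obtain ⟨p, hp, hmax⟩ := (isCompact_closedBall (0 : V) 1).exists_isMaxOn
    ⟨0, by simp⟩ hℓc.continuousOn
  have hM0 : 0 ≤ ℓ p := by simpa using hmax (show (0 : V) ∈ Metric.closedBall 0 1 by simp)
  have hp1 : ‖(p : C(X, ℝ))‖ ≤ 1 := by simpa using hp
  have hbound : ∀ q : V, ℓ q ≤ ℓ p * ‖q‖ := by
    intro q
    rcases eq_or_ne q 0 with rfl | hq
    · simp
    have hq' : 0 < ‖q‖ := norm_pos_iff.2 hq
    have h1 : ‖q‖⁻¹ • q ∈ Metric.closedBall (0 : V) 1 := by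
      have : ‖‖q‖⁻¹ • (q : C(X, ℝ))‖ = 1 := by
        rw [norm_smul, norm_inv, Real.norm_of_nonneg hq'.le]
        exact inv_mul_cancel₀ hq'.ne'
      rw [mem_closedBall_zero_iff]
      exact this.le
    have h2 : ℓ (‖q‖⁻¹ • q) ≤ ℓ p := hmax h1
    rw [map_smul, smul_eq_mul, inv_mul_le_iff₀ hq'] at h2
    linarith
  set M := ℓ p
  set s : C(Bool, ℝ) := ⟨fun b => if b then 1 else -1, continuous_of_discreteTopology⟩ with hs
  set h : ι → C(X × Bool, ℝ) := fun i =>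
    ⟨fun z => M * (s z.2 * g i z.1), by fun_prop⟩ with hh
  obtain ⟨P, hP⟩ := exists_probabilityMeasure_integral_eq h (fun i => L (g i)) (by
    intro c u hu
    set q : V := ⟨∑ i, c i • g i, Submodule.sum_mem _ fun i _ =>
      Submodule.smul_mem _ _ (Submodule.subset_span ⟨i, rfl⟩)⟩ with hq
    have hLq : ∑ i, c i * L (g i) = ℓ q := by simp [hℓ, hq]
    have hqx : ∀ x, ((q : C(X, ℝ)) x) = ∑ i, c i * g i x := by
      intro x; simp [hq, ContinuousMap.sum_apply]
    have hb : ∀ x, M * |(q : C(X, ℝ)) x| ≤ u := by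
      intro x
      have h1 := hu (x, true)
      have h2 := hu (x, false)
      have e1 : ∑ i, c i * h i (x, true) = M * (q : C(X, ℝ)) x := by
        rw [hqx, Finset.mul_sum]; refine Finset.sum_congr rfl fun i _ => ?_
        simp [hh, hs]; ring
      have e2 : ∑ i, c i * h i (x, false) = M * -(q : C(X, ℝ)) x := by
        rw [hqx, ← Finset.sum_neg_distrib, Finset.mul_sum]
        refine Finset.sum_congr rfl fun i _ => ?_
        simp [hh, hs]; ring
      rw [e1] at h1
      rw [e2] at h2
      rcases abs_choice ((q : C(X, ℝ)) x) with h | h <;> rw [h] <;> assumption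
    rw [hLq]
    refine (hbound q).trans ?_
    obtain ⟨x₀⟩ := ‹Nonempty X›
    have hu0 : 0 ≤ u := (mul_nonneg hM0 (abs_nonneg _)).trans (hb x₀)
    rcases hM0.eq_or_lt with h0 | h0
    · rwa [← h0, zero_mul]
    · rw [← le_div_iff₀' h0, Submodule.coe_norm, ContinuousMap.norm_le _ (by positivity)]
      intro x
      rw [le_div_iff₀' h0]
      exact hb x)
  refine ⟨p, p.2, fun x => ((p : C(X, ℝ)).norm_coe_le_norm x).trans hp1, ?_⟩
  obtain ⟨M', hM'⟩ : ∃ M' : NNReal, (M' : ℝ) = M := ⟨⟨M, hM0⟩, rfl⟩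
  set A : Set (X × Bool) := Prod.snd ⁻¹' {true} with hA
  have hAm : MeasurableSet A := measurable_snd (measurableSet_singleton _)
  set Q : Measure (X × Bool) := (P : Measure (X × Bool))
  have hmap : ∀ (B : Set (X × Bool)) (i : ι),
      ∫ x, g i x ∂(M' • (Q.restrict B).map Prod.fst) = M' * ∫ z in B, g i z.1 ∂Q := by
    intro B i
    rw [integral_smul_nnreal_measure, integral_map measurable_fst.aemeasurable
      (g i).continuous.aestronglyMeasurable]
    rfl
  refine ⟨M' • (Q.restrict A).map Prod.fst, M' • (Q.restrict Aᶜ).map Prod.fst,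
    inferInstance, inferInstance, ?_, fun i => ?_⟩
  · have h1 : Q.real A + Q.real Aᶜ = 1 := by
      rw [measureReal_add_measureReal_compl hAm, probReal_univ]
    have h2 : ∀ B : Set (X × Bool), (M' • (Q.restrict B).map Prod.fst).real Set.univ
        = M' * Q.real B := by
      intro B
      rw [measureReal_nnreal_smul_apply, map_measureReal_apply measurable_fst MeasurableSet.univ]
      simp
    rw [h2, h2, ← mul_add, h1, mul_one]
    exact hM'.le
  · rw [hmap, hmap, ← hP i, ← integral_add_compl hAm
      ((h i).continuous.integrable_of_compactSpace Q)]
    rw [sub_eq_add_neg, ← mul_neg, ← integral_neg, ← integral_const_mul, ← integral_const_mul]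
    congr 1
    · refine setIntegral_congr_fun hAm fun z hz => ?_
      have : z.2 = true := hz
      simp [hh, hs, this, hM']
    · refine setIntegral_congr_fun hAm.compl fun z hz => ?_
      have : z.2 = false := by simpa [hA] using hz
      simp [hh, hs, this, hM']

theorem fourier_eq_zpow (n : ℤ) (x : Circle2pi) :
    (fourier n x : ℂ) = (fourier 1 x : ℂ) ^ n := by
  rw [fourier_one, fourier_apply, AddCircle.toCircle_zsmul, Circle.coe_zpow]

theorem fourier_one_ne_zero (x : Circle2pi) : (fourier 1 x : ℂ) ≠ 0 := by
  rw [fourier_one]; exact Circle.coe_ne_zero _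

theorem fourier_one_injective : Function.Injective fun x : Circle2pi => (fourier 1 x : ℂ) := by
  intro x y h
  simp only [fourier_one] at h
  exact AddCircle.injective_toCircle (by positivity) (Circle.ext h)

/-- The function `cos (k t)` on the circle. -/
def cosMap (k : ℤ) : C(Circle2pi, ℝ) := ⟨fun x => (fourier k x).re, by fun_prop⟩

/-- The function `sin (k t)` on the circle. -/
def sinMap (k : ℤ) : C(Circle2pi, ℝ) := ⟨fun x => (fourier k x).im, by fun_prop⟩

/-- A finite family spanning the real trigonometric polynomials of degree at most `K`. -/
def trigFamily (K : ℕ) :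
    Finset.Icc (-K : ℤ) K ⊕ Finset.Icc (-K : ℤ) K → C(Circle2pi, ℝ) :=
  Sum.elim (fun k => cosMap k) (fun k => sinMap k)

theorem exists_polynomial_of_mem_span_trigFamily {K : ℕ} {p : C(Circle2pi, ℝ)}
    (hp : p ∈ Submodule.span ℝ (Set.range (trigFamily K))) :
    ∃ P : Polynomial ℂ, P.natDegree ≤ 2 * K ∧
      ∀ x, P.eval (fourier 1 x : ℂ) = (fourier 1 x : ℂ) ^ K * (p x : ℂ) := by
  have key : ∀ (k : ℤ) (a b : ℂ), k ∈ Finset.Icc (-K : ℤ) K → ∃ P : Polynomial ℂ,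
      P.natDegree ≤ 2 * K ∧ ∀ x : Circle2pi, P.eval (fourier 1 x : ℂ) =
        (fourier 1 x : ℂ) ^ K * (a * fourier k x + b * fourier (-k) x) := by
    intro k a b hk
    rw [Finset.mem_Icc] at hk
    obtain ⟨m, hm⟩ := Int.eq_ofNat_of_zero_le (show 0 ≤ K + k by lia)
    obtain ⟨n, hn⟩ := Int.eq_ofNat_of_zero_le (show 0 ≤ K - k by lia)
    refine ⟨Polynomial.C a * Polynomial.X ^ m + Polynomial.C b * Polynomial.X ^ n, ?_, ?_⟩
    · refine Polynomial.natDegree_add_le_of_degree_le ?_ ?_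
      · exact (Polynomial.natDegree_C_mul_X_pow_le _ _).trans (by lia)
      · exact (Polynomial.natDegree_C_mul_X_pow_le _ _).trans (by lia)
    · intro x
      have h0 := fourier_one_ne_zero x
      rw [fourier_eq_zpow k, fourier_eq_zpow (-k)]
      simp only [Polynomial.eval_add, Polynomial.eval_mul, Polynomial.eval_C,
        Polynomial.eval_pow, Polynomial.eval_X]
      rw [← zpow_natCast _ m, ← zpow_natCast _ n, ← hm, ← hn, sub_eq_add_neg, zpow_add₀ h0,
        zpow_add₀ h0, zpow_natCast]
      ring
  induction hp using Submodule.span_induction with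
  | mem p hp =>
    obtain ⟨k | k, rfl⟩ := hp
    · obtain ⟨P, hP, h⟩ := key k (1 / 2) (1 / 2) k.2
      refine ⟨P, hP, fun x => ?_⟩
      rw [h, fourier_neg]
      simp only [trigFamily, Sum.elim_inl, cosMap, ContinuousMap.coe_mk, Complex.re_eq_add_conj]
      ring
    · obtain ⟨P, hP, h⟩ := key k (1 / (2 * I)) (-1 / (2 * I)) k.2
      refine ⟨P, hP, fun x => ?_⟩
      rw [h, fourier_neg]
      simp only [trigFamily, Sum.elim_inr, sinMap, ContinuousMap.coe_mk, Complex.im_eq_sub_conj]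
      ring
  | zero => exact ⟨0, by simp, by simp⟩
  | add p q _ _ hp hq =>
    obtain ⟨P, hP, hP'⟩ := hp
    obtain ⟨Q, hQ, hQ'⟩ := hq
    refine ⟨P + Q, Polynomial.natDegree_add_le_of_degree_le hP hQ, fun x => ?_⟩
    rw [Polynomial.eval_add, hP', hQ', ContinuousMap.add_apply]
    push_cast
    ring
  | smul c p _ hp =>
    obtain ⟨P, hP, hP'⟩ := hp
    refine ⟨Polynomial.C (c : ℂ) * P, (Polynomial.natDegree_C_mul_le _ _).trans hP, fun x => ?_⟩
    rw [Polynomial.eval_mul, Polynomial.eval_C, hP', ContinuousMap.smul_apply, smul_eq_mul]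
    push_cast
    ring

/-- If `R(e^{it}) = e^{imt} G(t)` with `G ≥ 0` real, then zeros of `G` give double roots of `R`. -/
theorem isRoot_derivative_of_nonneg {R : Polynomial ℂ} {m : ℕ} {G : Circle2pi → ℝ}
    (hR : ∀ x, R.eval (fourier 1 x : ℂ) = (fourier 1 x : ℂ) ^ m * (G x : ℂ))
    (hG : ∀ x, 0 ≤ G x) {x : Circle2pi} (hx : G x = 0) :
    R.derivative.eval (fourier 1 x : ℂ) = 0 := by
  obtain ⟨t, rfl⟩ := QuotientAddGroup.mk_surjective x
  have hR0 : R.eval (fourier 1 (t : Circle2pi) : ℂ) = 0 := by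
    have := hR (t : Circle2pi)
    rw [show G (t : Circle2pi) = 0 from hx] at this
    simpa using this
  have hG' : ∀ s : ℝ, (G (s : Circle2pi) : ℂ) =
      fourier (-(m : ℤ)) (s : Circle2pi) * R.eval (fourier 1 (s : Circle2pi) : ℂ) := by
    intro s
    have h0 := fourier_one_ne_zero (s : Circle2pi)
    rw [hR, fourier_eq_zpow, _root_.zpow_neg, zpow_natCast, inv_mul_cancel_left₀ (pow_ne_zero _ h0)]
  have hd1 := _root_.hasDerivAt_fourier (2 * π) (-(m : ℤ)) t
  have hd2 := _root_.hasDerivAt_fourier (2 * π) 1 t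
  have hd3 := (R.hasDerivAt (fourier 1 (t : Circle2pi) : ℂ)).comp_of_eq t hd2 rfl
  have hd4 := hd1.mul hd3
  have hd5 : HasDerivAt (fun s : ℝ => (G (s : Circle2pi) : ℂ)) _ t :=
    hd4.congr_of_eventuallyEq (Filter.Eventually.of_forall fun s => hG' s)
  have hd6 := (Complex.reCLM.hasFDerivAt.comp_hasDerivAt t hd5)
  have hmin : IsLocalMin (fun s : ℝ => G (s : Circle2pi)) t :=
    Filter.Eventually.of_forall fun s => by
      show G (t : Circle2pi) ≤ _
      rw [show G (t : Circle2pi) = 0 from hx]; exact hG _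
  have hd7 : HasDerivAt (fun s : ℝ => G (s : Circle2pi)) _ t := hd6
  have h8 := hmin.hasDerivAt_eq_zero hd7
  have hd9 := hd7.ofReal_comp
  have h10 := hd9.unique hd5
  rw [h8] at h10
  simp only [Function.comp, hR0, mul_zero, zero_add, Complex.ofReal_zero] at h10
  have hz := fourier_one_ne_zero (t : Circle2pi)
  have hm : (fourier (-(m : ℤ)) (t : Circle2pi) : ℂ) ≠ 0 := by
    rw [fourier_eq_zpow]; exact zpow_ne_zero _ hz
  have := h10.symm
  simpa [hm, hz, Real.pi_ne_zero, Complex.I_ne_zero] using this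

theorem eq_const_or_card_peaks_le {K : ℕ} {p : C(Circle2pi, ℝ)}
    (hp : p ∈ Submodule.span ℝ (Set.range (trigFamily K))) (hp1 : ∀ x, |p x| ≤ 1) :
    (∀ x, p x = 1) ∨ (∀ x, p x = -1) ∨
      ∃ S : Finset Circle2pi, S.card ≤ 2 * K ∧ ∀ x, x ∈ S ↔ p x ^ 2 = 1 := by
  obtain ⟨P, hPd, hP⟩ := exists_polynomial_of_mem_span_trigFamily hp
  set R : Polynomial ℂ := Polynomial.X ^ (2 * K) - P ^ 2 with hRdef
  have hRd : R.natDegree ≤ 4 * K := by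
    refine (Polynomial.natDegree_sub_le_of_le (Polynomial.natDegree_X_pow_le _)
      (Polynomial.natDegree_pow_le_of_le 2 hPd)).trans ?_
    exact max_le (by lia) (by lia)
  have hR : ∀ x, R.eval (fourier 1 x : ℂ) =
      (fourier 1 x : ℂ) ^ (2 * K) * ((1 - p x ^ 2 : ℝ) : ℂ) := by
    intro x
    rw [hRdef, Polynomial.eval_sub, Polynomial.eval_pow, Polynomial.eval_pow, Polynomial.eval_X, hP]
    push_cast
    ring
  have hnn : ∀ x, 0 ≤ 1 - p x ^ 2 := fun x => by
    rw [sub_nonneg, sq_le_one_iff_abs_le_one]; exact hp1 x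
  by_cases hR0 : R = 0
  · have hsq : ∀ x, p x ^ 2 = 1 := by
      intro x
      have := hR x
      rw [hR0, Polynomial.eval_zero, eq_comm, mul_eq_zero] at this
      rcases this with h | h
      · exact absurd h (pow_ne_zero _ (fourier_one_ne_zero x))
      · have : 1 - p x ^ 2 = 0 := by exact_mod_cast h
        linarith
    rcases isPreconnected_univ.eq_or_eq_neg_of_sq_eq (f := p) (g := fun _ => (1 : ℝ))
      p.continuous.continuousOn continuousOn_const (fun x _ => by simpa using hsq x)
      (fun _ => one_ne_zero) with h | h
    · exact Or.inl fun x => h (Set.mem_univ x)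
    · exact Or.inr (Or.inl fun x => h (Set.mem_univ x))
  · refine Or.inr (Or.inr ?_)
    have hcount : ∀ x, p x ^ 2 = 1 → 2 ≤ R.roots.count (fourier 1 x : ℂ) := by
      intro x hx
      rw [Polynomial.count_roots]
      refine (Polynomial.one_lt_rootMultiplicity_iff_isRoot hR0).2 ⟨?_, ?_⟩
      · rw [Polynomial.IsRoot, hR, hx]; simp
      · exact isRoot_derivative_of_nonneg hR hnn (by rw [hx, sub_self])
    have hfin : {x | p x ^ 2 = 1}.Finite := by
      refine Set.Finite.of_finite_image (f := fun x : Circle2pi => (fourier 1 x : ℂ))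
        (R.roots.toFinset.finite_toSet.subset ?_) fourier_one_injective.injOn
      rintro _ ⟨x, hx, rfl⟩
      have := hcount x hx
      simpa using Multiset.count_pos.1 (show 0 < R.roots.count (fourier 1 x : ℂ) by lia)
    refine ⟨hfin.toFinset, ?_, fun x => by simp⟩
    set T := hfin.toFinset.map ⟨_, fourier_one_injective⟩ with hT
    have hle : 2 • T.val ≤ R.roots := by
      rw [Multiset.le_iff_count]
      intro z
      rw [Multiset.count_nsmul]
      by_cases hz : z ∈ T
      · have hz' := hz
        rw [hT, Finset.mem_map] at hz'
        obtain ⟨x, hx, rfl⟩ := hz'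
        rw [Multiset.count_eq_one_of_mem T.nodup hz]
        exact hcount x (by simpa using hx)
      · rw [Multiset.count_eq_zero_of_notMem hz]; simp
    have h1 := Multiset.card_le_card hle
    rw [Multiset.card_nsmul, Finset.card_val, hT, Finset.card_map] at h1
    have h2 := R.card_roots'
    lia

theorem eq_zero_of_sum_fourier_eq_zero {K : ℕ} {S : Finset Circle2pi} (hS : S.card ≤ 2 * K)
    {b : Circle2pi → ℝ}
    (hb : ∀ k : ℤ, |k| ≤ (K : ℤ) → ∑ x ∈ S, (b x : ℂ) * fourier (-k) x = 0) :
    ∀ x ∈ S, b x = 0 := by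
  have hv := Matrix.eq_zero_of_forall_pow_sum_mul_pow_eq_zero
    (f := fun i : Fin S.card => (fourier 1 (S.equivFin.symm i : Circle2pi) : ℂ))
    (v := fun i => (b (S.equivFin.symm i) : ℂ) * fourier (-(K : ℤ)) (S.equivFin.symm i : Circle2pi))
    (fun i j h => S.equivFin.symm.injective (Subtype.ext (fourier_one_injective h))) (by
      intro i
      have h1 := hb (K - i) (by rw [abs_le]; have := i.2; constructor <;> lia)
      rw [← Finset.sum_coe_sort, ← S.equivFin.symm.sum_comp] at h1
      rw [← h1]
      refine Finset.sum_congr rfl fun j _ => ?_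
      have h0 := fourier_one_ne_zero (S.equivFin.symm j : Circle2pi)
      rw [fourier_eq_zpow (-(K : ℤ)), fourier_eq_zpow (-(K - i : ℤ)),
        show (-(K - i : ℤ)) = -K + i by ring, zpow_add₀ h0, zpow_natCast]
      ring)
  intro x hx
  have h := congrFun hv (S.equivFin ⟨x, hx⟩)
  have h0 := zpow_ne_zero (-(K : ℤ)) (fourier_one_ne_zero x)
  rw [← fourier_eq_zpow] at h0
  simpa [h0, -fourier_apply] using h

/-- The real trigonometric polynomial with Fourier coefficients `y k`, `|k| ≤ K`. -/
def dataPolynomial (K : ℕ) (y : ℤ → ℂ) : C(Circle2pi, ℝ) :=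
  ⟨fun x => (∑ j ∈ Finset.Icc (-K : ℤ) K, y j * fourier j x).re, by fun_prop⟩

/-- The linear functional whose trigonometric moments are `y k`, `|k| ≤ K`. -/
def dataFunctional (K : ℕ) (y : ℤ → ℂ) : C(Circle2pi, ℝ) →ₗ[ℝ] ℝ where
  toFun f := ∫ x, f x * dataPolynomial K y x ∂AddCircle.haarAddCircle
  map_add' f g := by
    simp only [ContinuousMap.add_apply, add_mul]
    exact integral_add (Continuous.integrable_of_compactSpace (by fun_prop) _)
      (Continuous.integrable_of_compactSpace (by fun_prop) _)
  map_smul' c f := by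
    simp only [ContinuousMap.smul_apply, smul_eq_mul, mul_assoc, RingHom.id_apply]
    exact integral_const_mul _ _

theorem ofReal_dataPolynomial {K : ℕ} {y : ℤ → ℂ}
    (hsym : ∀ k : ℤ, |k| ≤ (K : ℤ) → y (-k) = starRingEnd ℂ (y k)) (x : Circle2pi) :
    (dataPolynomial K y x : ℂ) = ∑ j ∈ Finset.Icc (-K : ℤ) K, y j * fourier j x := by
  refine Complex.conj_eq_iff_re.1 ?_
  rw [map_sum]
  refine Finset.sum_bij' (fun j _ => -j) (fun j _ => -j) ?_ ?_ ?_ ?_ ?_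
  · intro j hj
    rw [Finset.mem_Icc] at hj ⊢
    constructor <;> lia
  · intro j hj
    rw [Finset.mem_Icc] at hj ⊢
    constructor <;> lia
  · intro j _; exact neg_neg j
  · intro j _; exact neg_neg j
  · intro j hj
    rw [Finset.mem_Icc] at hj
    rw [map_mul, hsym j (abs_le.2 hj), fourier_neg]

theorem integral_fourier_mul_dataPolynomial {K : ℕ} {y : ℤ → ℂ}
    (hsym : ∀ k : ℤ, |k| ≤ (K : ℤ) → y (-k) = starRingEnd ℂ (y k)) {k : ℤ}
    (hk : |k| ≤ (K : ℤ)) :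
    ∫ x : Circle2pi, (fourier (-k) x : ℂ) * (dataPolynomial K y x : ℂ)
      ∂AddCircle.haarAddCircle = y k := by
  have h1 : ∀ j : ℤ, ∫ x : Circle2pi, (fourier (-k) x : ℂ) * fourier j x
      ∂AddCircle.haarAddCircle = if j = k then 1 else 0 := by
    intro j
    have := congrFun (fourierCoeff_fourier (T := 2 * π) j) k
    rw [fourierCoeff, Pi.single_apply] at this
    simp only [smul_eq_mul] at this
    rw [this]
    simp [eq_comm]
  have h2 : ∀ x : Circle2pi, (fourier (-k) x : ℂ) * (dataPolynomial K y x : ℂ) =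
      ∑ j ∈ Finset.Icc (-K : ℤ) K, y j * ((fourier (-k) x : ℂ) * fourier j x) := by
    intro x
    rw [ofReal_dataPolynomial hsym, Finset.mul_sum]
    exact Finset.sum_congr rfl fun j _ => by ring
  simp_rw [h2]
  have h3 : ∀ j : ℤ, Integrable (fun x : Circle2pi => y j * ((fourier (-k) x : ℂ) * fourier j x))
      AddCircle.haarAddCircle := fun j =>
    Continuous.integrable_of_compactSpace (by fun_prop) _
  rw [integral_finsetSum _ fun j _ => h3 j]
  simp_rw [integral_const_mul, h1]
  have hk' : k ∈ Finset.Icc (-K : ℤ) K := Finset.mem_Icc.2 (abs_le.1 hk)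
  simp [hk']

theorem dataFunctional_cosMap {K : ℕ} {y : ℤ → ℂ}
    (hsym : ∀ k : ℤ, |k| ≤ (K : ℤ) → y (-k) = starRingEnd ℂ (y k)) {k : ℤ}
    (hk : |k| ≤ (K : ℤ)) : dataFunctional K y (cosMap (-k)) = (y k).re := by
  rw [← integral_fourier_mul_dataPolynomial hsym hk, ← RCLike.re_eq_complex_re, ← integral_re]
  · simp [dataFunctional, cosMap]
  · exact Continuous.integrable_of_compactSpace (by fun_prop) _

theorem dataFunctional_sinMap {K : ℕ} {y : ℤ → ℂ}
    (hsym : ∀ k : ℤ, |k| ≤ (K : ℤ) → y (-k) = starRingEnd ℂ (y k)) {k : ℤ}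
    (hk : |k| ≤ (K : ℤ)) : dataFunctional K y (sinMap (-k)) = (y k).im := by
  rw [← integral_fourier_mul_dataPolynomial hsym hk, ← RCLike.im_eq_complex_im, ← integral_im]
  · simp [dataFunctional, sinMap]
  · exact Continuous.integrable_of_compactSpace (by fun_prop) _

theorem integral_cosMap (k : ℤ) (μ : Measure Circle2pi) [IsFiniteMeasure μ] :
    ∫ x, cosMap k x ∂μ = (∫ x : Circle2pi, (fourier k x : ℂ) ∂μ).re := by
  rw [← RCLike.re_eq_complex_re, ← integral_re ((fourier k).continuous.integrable_of_compactSpace μ)]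
  rfl

theorem integral_sinMap (k : ℤ) (μ : Measure Circle2pi) [IsFiniteMeasure μ] :
    ∫ x, sinMap k x ∂μ = (∫ x : Circle2pi, (fourier k x : ℂ) ∂μ).im := by
  rw [← RCLike.im_eq_complex_im, ← integral_im ((fourier k).continuous.integrable_of_compactSpace μ)]
  rfl

theorem fourier_moments_iff {K : ℕ} {y : ℤ → ℂ}
    (hsym : ∀ k : ℤ, |k| ≤ (K : ℤ) → y (-k) = starRingEnd ℂ (y k))
    (μ ν : Measure Circle2pi) [IsFiniteMeasure μ] [IsFiniteMeasure ν] :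
    (∀ k : ℤ, |k| ≤ (K : ℤ) →
      ∫ x : Circle2pi, (fourier (-k) x : ℂ) ∂μ - ∫ x : Circle2pi, (fourier (-k) x : ℂ) ∂ν = y k) ↔
    ∀ i, ∫ x, trigFamily K i x ∂μ - ∫ x, trigFamily K i x ∂ν =
      dataFunctional K y (trigFamily K i) := by
  have habs : ∀ k : Finset.Icc (-K : ℤ) K, |-(k : ℤ)| ≤ (K : ℤ) := fun k => by
    rw [abs_neg]; exact abs_le.2 (Finset.mem_Icc.1 k.2)
  constructor
  · rintro h (k | k)
    · have h1 := dataFunctional_cosMap hsym (habs k)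
      have h2 := h _ (habs k)
      rw [neg_neg] at h1 h2
      simp only [trigFamily, Sum.elim_inl]
      rw [h1, ← h2, integral_cosMap, integral_cosMap, Complex.sub_re]
    · have h1 := dataFunctional_sinMap hsym (habs k)
      have h2 := h _ (habs k)
      rw [neg_neg] at h1 h2
      simp only [trigFamily, Sum.elim_inr]
      rw [h1, ← h2, integral_sinMap, integral_sinMap, Complex.sub_im]
  · intro h k hk
    have hk' : -k ∈ Finset.Icc (-K : ℤ) K := by
      rw [abs_le] at hk
      rw [Finset.mem_Icc]
      constructor <;> lia
    have h1 := h (Sum.inl ⟨-k, hk'⟩)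
    have h2 := h (Sum.inr ⟨-k, hk'⟩)
    simp only [trigFamily, Sum.elim_inl, Sum.elim_inr] at h1 h2
    rw [dataFunctional_cosMap hsym hk, integral_cosMap, integral_cosMap] at h1
    rw [dataFunctional_sinMap hsym hk, integral_sinMap, integral_sinMap] at h2
    exact Complex.ext (by rw [Complex.sub_re, h1]) (by rw [Complex.sub_im, h2])

theorem integral_sub_integral_eq_of_mem_span {X ι : Type*} [TopologicalSpace X] [CompactSpace X]
    [MeasurableSpace X] [OpensMeasurableSpace X] {g : ι → C(X, ℝ)} {L : C(X, ℝ) →ₗ[ℝ] ℝ}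
    {μ ν : Measure X} [IsFiniteMeasure μ] [IsFiniteMeasure ν]
    (h : ∀ i, ∫ x, g i x ∂μ - ∫ x, g i x ∂ν = L (g i)) {p : C(X, ℝ)}
    (hp : p ∈ Submodule.span ℝ (Set.range g)) :
    ∫ x, p x ∂μ - ∫ x, p x ∂ν = L p := by
  induction hp using Submodule.span_induction with
  | mem p hp => obtain ⟨i, rfl⟩ := hp; exact h i
  | zero => simp
  | add p q _ _ hp hq =>
    simp only [ContinuousMap.add_apply]
    rw [map_add, ← hp, ← hq,
      integral_add (p.continuous.integrable_of_compactSpace μ) (q.continuous.integrable_of_compactSpace μ),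
      integral_add (p.continuous.integrable_of_compactSpace ν) (q.continuous.integrable_of_compactSpace ν)]
    ring
  | smul c p _ hp =>
    simp only [ContinuousMap.smul_apply, smul_eq_mul]
    rw [map_smul, ← hp, integral_const_mul, integral_const_mul, smul_eq_mul]
    ring

namespace MeasureTheory.SignedMeasure

variable {X : Type*} [MeasurableSpace X]

theorem posPart_add_eq_of_eq_sub {w : SignedMeasure X} {μ ν : Measure X} [IsFiniteMeasure μ]
    [IsFiniteMeasure ν] (hw : w = μ.toSignedMeasure - ν.toSignedMeasure) :
    w.toJordanDecomposition.posPart + ν = μ + w.toJordanDecomposition.negPart := by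
  rw [← Measure.toSignedMeasure_eq_toSignedMeasure_iff, Measure.toSignedMeasure_add,
    Measure.toSignedMeasure_add]
  have h := w.toSignedMeasure_toJordanDecomposition
  rw [JordanDecomposition.toSignedMeasure] at h
  rw [← sub_eq_sub_iff_add_eq_add, h, hw]

theorem integral_sub_integral_eq_of_eq_sub {w : SignedMeasure X} {μ ν : Measure X}
    [IsFiniteMeasure μ] [IsFiniteMeasure ν] (hw : w = μ.toSignedMeasure - ν.toSignedMeasure)
    {E : Type*} [NormedAddCommGroup E] [NormedSpace ℝ E] {f : X → E}
    (hf : ∀ (ρ : Measure X) [IsFiniteMeasure ρ], Integrable f ρ) :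
    ∫ x, f x ∂w.toJordanDecomposition.posPart - ∫ x, f x ∂w.toJordanDecomposition.negPart =
      ∫ x, f x ∂μ - ∫ x, f x ∂ν := by
  rw [sub_eq_sub_iff_add_eq_add, ← integral_add_measure (hf _) (hf _),
    ← integral_add_measure (hf _) (hf _), posPart_add_eq_of_eq_sub hw]

theorem totalVariation_real_univ (w : SignedMeasure X) :
    w.totalVariation.real Set.univ = w.toJordanDecomposition.posPart.real Set.univ +
      w.toJordanDecomposition.negPart.real Set.univ := by
  rw [totalVariation, measureReal_add_apply]

theorem totalVariation_real_univ_le_of_eq_sub {w : SignedMeasure X} {μ ν : Measure X}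
    [IsFiniteMeasure μ] [IsFiniteMeasure ν] (hw : w = μ.toSignedMeasure - ν.toSignedMeasure) :
    w.totalVariation.real Set.univ ≤ μ.real Set.univ + ν.real Set.univ := by
  obtain ⟨i, hi, hi0, hi0', hpos, hneg⟩ := w.toJordanDecomposition_spec
  rw [totalVariation_real_univ, hpos, hneg, toMeasureOfZeroLE_real_apply _ hi0 hi .univ,
    toMeasureOfLEZero_real_apply _ hi0' hi.compl .univ, Set.inter_univ, Set.inter_univ, hw,
    Measure.toSignedMeasure_sub_apply hi, Measure.toSignedMeasure_sub_apply hi.compl]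
  have h1 := measureReal_mono (μ := μ) (Set.subset_univ i)
  have h2 := measureReal_mono (μ := ν) (Set.subset_univ iᶜ)
  have h3 := measureReal_nonneg (μ := ν) (s := i)
  have h4 := measureReal_nonneg (μ := μ) (s := iᶜ)
  linarith

theorem nonneg_of_negPart_eq_zero {w : SignedMeasure X}
    (h : w.toJordanDecomposition.negPart = 0) : 0 ≤ w := by
  intro i hi
  rw [w.apply_eq_posPart_real_sub_negPart_real hi, h]
  simp

section Finite

variable [MeasurableSingletonClass X] {w : SignedMeasure X} {S : Finset X}

theorem eq_sum_smul_dirac_of_totalVariation_compl_eq_zero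
    (hS : w.totalVariation (S : Set X)ᶜ = 0) :
    w = ∑ x ∈ S, w {x} • (Measure.dirac x).toSignedMeasure := by
  classical
  ext i hi
  rw [totalVariation, Measure.add_apply, add_eq_zero] at hS
  have key : ∀ μ : Measure X, IsFiniteMeasure μ → μ (S : Set X)ᶜ = 0 →
      μ.real i = ∑ x ∈ S, if x ∈ i then μ.real {x} else 0 := by
    intro μ _ hμ
    have h1 : μ.real i = μ.real (i ∩ S) := by
      rw [measureReal_def, measureReal_def, measure_inter_conull hμ]
    rw [h1, ← Finset.sum_filter, sum_measureReal_singleton]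
    congr 1
    ext x
    simp [and_comm]
  rw [w.apply_eq_posPart_real_sub_negPart_real hi, key _ inferInstance hS.1,
    key _ inferInstance hS.2, ← Finset.sum_sub_distrib, FunLike.coe_sum,
    Finset.sum_apply]
  refine Finset.sum_congr rfl fun x _ => ?_
  rw [_root_.smul_apply, Measure.toSignedMeasure_apply_measurable hi,
    w.apply_eq_posPart_real_sub_negPart_real (measurableSet_singleton x),
    measureReal_def (μ := Measure.dirac x), Measure.dirac_apply' x hi]
  by_cases hx : x ∈ i <;> simp [hx]

theorem integral_sub_integral_eq_sum (hS : w.totalVariation (S : Set X)ᶜ = 0)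
    {E : Type*} [NormedAddCommGroup E] [NormedSpace ℝ E] [CompleteSpace E] {f : X → E}
    (hf : ∀ (ρ : Measure X) [IsFiniteMeasure ρ], Integrable f ρ) :
    ∫ x, f x ∂w.toJordanDecomposition.posPart - ∫ x, f x ∂w.toJordanDecomposition.negPart =
      ∑ x ∈ S, w {x} • f x := by
  rw [totalVariation, Measure.add_apply, add_eq_zero] at hS
  have key : ∀ μ : Measure X, IsFiniteMeasure μ → μ (S : Set X)ᶜ = 0 →
      ∫ x, f x ∂μ = ∑ x ∈ S, μ.real {x} • f x := by
    intro μ _ hμ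
    rw [← setIntegral_finset S (hf μ).integrableOn, Measure.restrict_eq_self_of_ae_mem]
    exact hμ
  rw [key _ inferInstance hS.1, key _ inferInstance hS.2, ← Finset.sum_sub_distrib]
  refine Finset.sum_congr rfl fun x _ => ?_
  rw [w.apply_eq_posPart_real_sub_negPart_real (measurableSet_singleton x), sub_smul]

end Finite

end MeasureTheory.SignedMeasure

/-- Complementary slackness: if `μ(1) + ν(1) ≤ μ(p) - ν(p)` with `|p| ≤ 1`, then `μ` lives on
`{p = 1}` and `ν` lives on `{p = -1}`. -/
theorem ae_eq_of_mass_le {X : Type*} [TopologicalSpace X] [CompactSpace X]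
    [MeasurableSpace X] [OpensMeasurableSpace X] {μ ν : Measure X} [IsFiniteMeasure μ]
    [IsFiniteMeasure ν] {p : C(X, ℝ)} (hp : ∀ x, |p x| ≤ 1)
    (h : μ.real Set.univ + ν.real Set.univ ≤ ∫ x, p x ∂μ - ∫ x, p x ∂ν) :
    (∀ᵐ x ∂μ, p x = 1) ∧ ∀ᵐ x ∂ν, p x = -1 := by
  have hi1 : Integrable (fun x => 1 - p x) μ :=
    (integrable_const 1).sub (p.continuous.integrable_of_compactSpace μ)
  have hi2 : Integrable (fun x => 1 + p x) ν :=
    (integrable_const 1).add (p.continuous.integrable_of_compactSpace ν)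
  have hn1 : ∀ x, 0 ≤ 1 - p x := fun x => by linarith [(abs_le.1 (hp x)).2]
  have hn2 : ∀ x, 0 ≤ 1 + p x := fun x => by linarith [(abs_le.1 (hp x)).1]
  have e1 : ∫ x, 1 - p x ∂μ = μ.real Set.univ - ∫ x, p x ∂μ := by
    rw [integral_sub (integrable_const 1) (p.continuous.integrable_of_compactSpace μ)]; simp
  have e2 : ∫ x, 1 + p x ∂ν = ν.real Set.univ + ∫ x, p x ∂ν := by
    rw [integral_add (integrable_const 1) (p.continuous.integrable_of_compactSpace ν)]; simp
  have p1 : 0 ≤ ∫ x, 1 - p x ∂μ := integral_nonneg hn1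
  have p2 : 0 ≤ ∫ x, 1 + p x ∂ν := integral_nonneg hn2
  have z1 := (integral_eq_zero_iff_of_nonneg hn1 hi1).1 (by linarith)
  have z2 := (integral_eq_zero_iff_of_nonneg hn2 hi2).1 (by linarith)
  constructor
  · filter_upwards [z1] with x hx
    simp only [Pi.zero_apply] at hx
    linarith
  · filter_upwards [z2] with x hx
    simp only [Pi.zero_apply] at hx
    linarith

theorem integral_sub_integral_le_mass {X : Type*} [TopologicalSpace X] [CompactSpace X]
    [MeasurableSpace X] [OpensMeasurableSpace X] {μ ν : Measure X} [IsFiniteMeasure μ]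
    [IsFiniteMeasure ν] {p : C(X, ℝ)} (hp : ∀ x, |p x| ≤ 1) :
    ∫ x, p x ∂μ - ∫ x, p x ∂ν ≤ μ.real Set.univ + ν.real Set.univ := by
  have h1 := norm_integral_le_of_norm_le_const (f := p) (μ := μ) (Filter.Eventually.of_forall hp)
  have h2 := norm_integral_le_of_norm_le_const (f := p) (μ := ν) (Filter.Eventually.of_forall hp)
  rw [one_mul, Real.norm_eq_abs] at h1 h2
  linarith [(abs_le.1 h1).2, (abs_le.1 h2).1]

theorem tvNorm_eq (w : SignedMeasure Circle2pi) :
    tvNorm w = w.toJordanDecomposition.posPart.real Set.univ +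
      w.toJordanDecomposition.negPart.real Set.univ :=
  w.totalVariation_real_univ

theorem Feasible.mass_eq {Kc : ℕ} {y : ℤ → ℂ} {w : SignedMeasure Circle2pi}
    (hw : Feasible Kc y w) :
    w.toJordanDecomposition.posPart.real Set.univ -
      w.toJordanDecomposition.negPart.real Set.univ = (y 0).re := by
  have h := hw 0 (by simp)
  rw [← h, sFourierCoeff]
  simp

theorem Feasible.apply_univ {Kc : ℕ} {y : ℤ → ℂ} {w : SignedMeasure Circle2pi}
    (hw : Feasible Kc y w) : w Set.univ = (y 0).re := by
  rw [w.apply_eq_posPart_real_sub_negPart_real .univ, hw.mass_eq]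

theorem Feasible.eq_of_totalVariation_compl_eq_zero {Kc : ℕ} {y : ℤ → ℂ}
    {v w : SignedMeasure Circle2pi} (hv : Feasible Kc y v) (hw : Feasible Kc y w)
    {S : Finset Circle2pi} (hS : S.card ≤ 2 * Kc)
    (hvS : v.totalVariation (S : Set Circle2pi)ᶜ = 0)
    (hwS : w.totalVariation (S : Set Circle2pi)ᶜ = 0) : v = w := by
  have hzero := eq_zero_of_sum_fourier_eq_zero hS (b := fun x => v {x} - w {x}) (by
    intro k hk
    have h := (hv k hk).trans (hw k hk).symm
    have hf : ∀ (ρ : Measure Circle2pi) [IsFiniteMeasure ρ],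
        Integrable (fun x : Circle2pi => (fourier (-k) x : ℂ)) ρ := fun ρ _ =>
      (fourier (-k)).continuous.integrable_of_compactSpace ρ
    rw [sFourierCoeff, sFourierCoeff, SignedMeasure.integral_sub_integral_eq_sum hvS hf,
      SignedMeasure.integral_sub_integral_eq_sum hwS hf, ← sub_eq_zero,
      ← Finset.sum_sub_distrib] at h
    rw [← h]
    refine Finset.sum_congr rfl fun x _ => ?_
    rw [Complex.real_smul, Complex.real_smul]
    push_cast
    ring)
  rw [SignedMeasure.eq_sum_smul_dirac_of_totalVariation_compl_eq_zero hvS,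
    SignedMeasure.eq_sum_smul_dirac_of_totalVariation_compl_eq_zero hwS]
  refine Finset.sum_congr rfl fun x hx => ?_
  rw [sub_eq_zero.1 (hzero x hx)]

/-- Existence of a minimizer together with a dual trigonometric polynomial that controls the
supports of all minimizers. -/
theorem exists_isBPCSolution_and_certificate {Kc : ℕ} {y : ℤ → ℂ}
    (hsym : ∀ k : ℤ, |k| ≤ (Kc : ℤ) → y (-k) = starRingEnd ℂ (y k)) :
    ∃ w : SignedMeasure Circle2pi, IsBPCSolution Kc y w ∧
      ∃ p ∈ Submodule.span ℝ (Set.range (trigFamily Kc)), (∀ x, |p x| ≤ 1) ∧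
        ∀ v : SignedMeasure Circle2pi, IsBPCSolution Kc y v →
          (∀ᵐ x ∂v.toJordanDecomposition.posPart, p x = 1) ∧
            ∀ᵐ x ∂v.toJordanDecomposition.negPart, p x = -1 := by
  obtain ⟨p, hp, hp1, μ, ν, _, _, hmass, hmom⟩ :=
    exists_dual_certificate (trigFamily Kc) (dataFunctional Kc y)
  set w : SignedMeasure Circle2pi := μ.toSignedMeasure - ν.toSignedMeasure with hw
  have hwf : Feasible Kc y w := by
    intro k hk
    rw [← (fourier_moments_iff hsym μ ν).2 hmom k hk]
    exact SignedMeasure.integral_sub_integral_eq_of_eq_sub hw fun ρ _ =>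
      (fourier (-k)).continuous.integrable_of_compactSpace ρ
  have hwn : tvNorm w ≤ dataFunctional Kc y p :=
    (SignedMeasure.totalVariation_real_univ_le_of_eq_sub hw).trans hmass
  have hpair : ∀ v : SignedMeasure Circle2pi, Feasible Kc y v →
      ∫ x, p x ∂v.toJordanDecomposition.posPart - ∫ x, p x ∂v.toJordanDecomposition.negPart =
        dataFunctional Kc y p := fun v hv =>
    integral_sub_integral_eq_of_mem_span ((fourier_moments_iff hsym _ _).1 hv) hp
  refine ⟨w, ⟨hwf, fun v hv => hwn.trans ?_⟩, p, hp, hp1, fun v hv => ae_eq_of_mass_le hp1 ?_⟩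
  · rw [← hpair v hv, tvNorm_eq]
    exact integral_sub_integral_le_mass hp1
  · rw [hpair v hv.1, ← tvNorm_eq]
    exact (hv.2 w hwf).trans hwn

/-- If `y 0 ≥ 0` and there is no nonnegative feasible measure, then (BPC) has a unique
solution, composed of at most `2 K_c` Dirac masses with at least one positive and one
negative weight. -/
theorem unique_sparse_solution_of_no_nonneg_feasible (Kc : ℕ) (hKc : 1 ≤ Kc) (y : ℤ → ℂ)
    (hsym : ∀ k : ℤ, |k| ≤ (Kc : ℤ) → y (-k) = starRingEnd ℂ (y k))
    (hy0 : 0 ≤ (y 0).re)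
    (hno : ¬ ∃ w₀ : MeasureTheory.SignedMeasure Circle2pi, 0 ≤ w₀ ∧ Feasible Kc y w₀) :
    ∃ w' : MeasureTheory.SignedMeasure Circle2pi,
      IsBPCSolution Kc y w' ∧
      (∀ w : MeasureTheory.SignedMeasure Circle2pi, IsBPCSolution Kc y w → w = w') ∧
      ∃ (N : ℕ) (x : Fin N → Circle2pi) (a : Fin N → ℝ),
        1 ≤ N ∧ N ≤ 2 * Kc ∧ Function.Injective x ∧ (∀ i, a i ≠ 0) ∧
        (∃ i, 0 < a i) ∧ (∃ j, a j < 0) ∧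
        w' = ∑ i, a i • diracSM (x i) := by
  obtain ⟨w, hw, p, hp, hp1, hslack⟩ := exists_isBPCSolution_and_certificate hsym
  have hneg : w.toJordanDecomposition.negPart ≠ 0 := fun h =>
    hno ⟨w, SignedMeasure.nonneg_of_negPart_eq_zero h, hw.1⟩
  have hpos : w.toJordanDecomposition.posPart ≠ 0 := fun h => hneg <| by
    have hm := hw.1.mass_eq
    rw [h, measureReal_zero_apply] at hm
    rw [← Measure.measure_univ_eq_zero, ← measureReal_eq_zero_iff]
    exact le_antisymm (by linarith) measureReal_nonneg
  obtain ⟨hae1, hae2⟩ := hslack w hw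
  rcases eq_const_or_card_peaks_le hp hp1 with h1 | h1 | ⟨S, hScard, hS⟩
  · refine absurd (ae_eq_bot.1 (Filter.eventually_false_iff_eq_bot.1 ?_)) hneg
    filter_upwards [hae2] with x hx
    linarith [h1 x]
  · refine absurd (ae_eq_bot.1 (Filter.eventually_false_iff_eq_bot.1 ?_)) hpos
    filter_upwards [hae1] with x hx
    linarith [h1 x]
  have hsupp : ∀ v : SignedMeasure Circle2pi, IsBPCSolution Kc y v →
      v.totalVariation (S : Set Circle2pi)ᶜ = 0 := by
    intro v hv
    obtain ⟨h1, h2⟩ := hslack v hv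
    rw [SignedMeasure.totalVariation, Measure.add_apply, add_eq_zero]
    have hmem : ∀ x, p x = 1 ∨ p x = -1 → x ∈ (S : Set Circle2pi) := fun x hx =>
      (hS x).2 (by rcases hx with hx | hx <;> rw [hx] <;> norm_num)
    exact ⟨mem_ae_iff.1 (h1.mono fun x hx => hmem x (Or.inl hx)),
      mem_ae_iff.1 (h2.mono fun x hx => hmem x (Or.inr hx))⟩
  refine ⟨w, hw, fun v hv =>
    hv.1.eq_of_totalVariation_compl_eq_zero hw.1 hScard (hsupp v hv) (hsupp w hw), ?_⟩
  have hrep := SignedMeasure.eq_sum_smul_dirac_of_totalVariation_compl_eq_zero (hsupp w hw)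
  have hsum : ∑ x ∈ S, w {x} = (y 0).re := by
    rw [← hw.1.apply_univ]
    conv_rhs => rw [hrep]
    simp
  have hexneg : ∃ x ∈ S, w {x} < 0 := by
    by_contra! hcon
    refine hno ⟨w, ?_, hw.1⟩
    rw [hrep]
    refine Finset.sum_nonneg fun x hx i hi => ?_
    rw [_root_.smul_apply, Measure.toSignedMeasure_apply_measurable hi]
    exact mul_nonneg (hcon x hx) measureReal_nonneg
  have hexpos : ∃ x ∈ S, 0 < w {x} := by
    by_contra! hcon
    obtain ⟨x, hx, hx0⟩ := hexneg
    have : ∑ x ∈ S, w {x} < 0 := Finset.sum_neg' hcon ⟨x, hx, hx0⟩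
    linarith
  set T := S.filter fun x => w {x} ≠ 0 with hT
  have hmem : ∀ x, x ∈ T ↔ x ∈ S ∧ w {x} ≠ 0 := fun x => Finset.mem_filter
  obtain ⟨x₁, hx₁, hx₁'⟩ := hexpos
  obtain ⟨x₂, hx₂, hx₂'⟩ := hexneg
  refine ⟨T.card, fun i => T.equivFin.symm i, fun i => w {(T.equivFin.symm i : Circle2pi)},
    Finset.card_pos.2 ⟨x₁, (hmem _).2 ⟨hx₁, hx₁'.ne'⟩⟩,
    (Finset.card_filter_le _ _).trans hScard,
    Subtype.val_injective.comp T.equivFin.symm.injective,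
    fun i => ((hmem _).1 (T.equivFin.symm i).2).2,
    ⟨T.equivFin ⟨x₁, (hmem _).2 ⟨hx₁, hx₁'.ne'⟩⟩, by simpa using hx₁'⟩,
    ⟨T.equivFin ⟨x₂, (hmem _).2 ⟨hx₂, hx₂'.ne⟩⟩, by simpa using hx₂'⟩, ?_⟩
  rw [T.equivFin.symm.sum_comp (fun x : T => w {(x : Circle2pi)} • diracSM x),
    Finset.sum_coe_sort T (fun x => w {x} • diracSM x)]
  conv_lhs => rw [hrep]
  refine (Finset.sum_filter_of_ne (p := fun x => w {x} ≠ 0) fun x _ hx h0 => hx ?_).symm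
  rw [h0, zero_smul]
end
end

section
/- If the Hermitian Toeplitz matrix T_y is positive semidefinite and rank(T_y) ≤ K_c (rank deficient), then (BPC) has a unique solution w*, and w* = Σ_{i=1}^r a_i δ_{x_i} where r = rank(T_y), the x_i ∈ 𝕋 are pairwise distinct and all weights a_i are strictly positive. (Respectively, if T_y is negative semidefinite and rank deficient, the unique solution consists of exactly rank(T_y) Dirac masses with strictly negative weights.) -/
open MeasureTheory Complex Real Matrix
open scoped Real ComplexOrder

noncomputable section

/-- The Hermitian Toeplitz matrix `T_y` with entries `(T_y)_{i,j} = y_{j-i}`. -/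
def Ty (Kc : ℕ) (y : ℤ → ℂ) : Matrix (Fin (Kc + 1)) (Fin (Kc + 1)) ℂ :=
  Matrix.of fun i j => y ((j : ℤ) - (i : ℤ))

section LinearAlgebra

variable {V : Type*} [NormedAddCommGroup V] [InnerProductSpace ℂ V] [FiniteDimensional ℂ V]

/-- Two finite families with the same Gram matrix are related by a linear isometry. -/
theorem exists_linearIsometry_of_inner_eq {ι : Type*} [Fintype ι] (f g : ι → V)
    (h : ∀ i j, inner ℂ (f i) (f j) = inner ℂ (g i) (g j)) :
    ∃ U : V →ₗᵢ[ℂ] V, ∀ i, U (f i) = g i := by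
  classical
  set F := Fintype.linearCombination ℂ f with hF
  set G := Fintype.linearCombination ℂ g with hG
  have hnorm : ∀ c, ‖F c‖ = ‖G c‖ := fun c => by
    have : inner ℂ (F c) (F c) = inner ℂ (G c) (G c) := by
      simp only [hF, hG, Fintype.linearCombination_apply, sum_inner, inner_sum, inner_smul_left,
        inner_smul_right, h]
    rw [inner_self_eq_norm_sq_to_K, inner_self_eq_norm_sq_to_K] at this
    have h2 : ‖F c‖ ^ 2 = ‖G c‖ ^ 2 := by exact_mod_cast this
    exact (sq_eq_sq₀ (norm_nonneg _) (norm_nonneg _)).1 h2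
  obtain ⟨s, hs⟩ := F.rangeRestrict.exists_rightInverse_of_surjective F.range_rangeRestrict
  have hFs : ∀ v : LinearMap.range F, F (s v) = v := fun v =>
    congrArg Subtype.val (LinearMap.congr_fun hs v)
  let L : LinearMap.range F →ₗᵢ[ℂ] V :=
    ⟨G ∘ₗ s, fun v => by
      rw [LinearMap.comp_apply, ← hnorm, hFs, Submodule.coe_norm]⟩
  refine ⟨L.extend, fun i => ?_⟩
  have hFi : F (Pi.single i 1) = f i := by simp [hF]
  have hGi : G (Pi.single i 1) = g i := by simp [hG]
  have hmem : f i ∈ LinearMap.range F := ⟨_, hFi⟩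
  have h0 : G (s ⟨f i, hmem⟩) - G (Pi.single i 1) = 0 := by
    rw [← map_sub, ← norm_eq_zero, ← hnorm, map_sub, hFs, hFi, sub_self, norm_zero]
  rw [← hGi, ← sub_eq_zero.1 h0]
  exact L.extend_apply ⟨f i, hmem⟩

/-- Linear isometries of a finite-dimensional inner product space are semisimple. -/
theorem LinearIsometry.isSemisimple (U : V →ₗᵢ[ℂ] V) :
    Module.End.IsSemisimple (U.toLinearMap : Module.End ℂ V) := by
  rw [Module.End.isSemisimple_iff]
  intro p hp
  refine ⟨pᗮ, ?_, p.isCompl_orthogonal⟩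
  have hp' : ∀ x ∈ p, U.toLinearMap x ∈ p := hp
  have hsurj : Function.Surjective (U.toLinearMap.restrict hp') := by
    apply LinearMap.surjective_of_injective
    intro a b hab
    exact Subtype.ext (U.injective (congrArg Subtype.val hab))
  intro v hv
  rw [Submodule.mem_comap, Submodule.mem_orthogonal]
  intro w hw
  obtain ⟨w', hw'⟩ := hsurj ⟨w, hw⟩
  have : U (w' : V) = w := congrArg Subtype.val hw'
  rw [← this, LinearIsometry.coe_toLinearMap, U.inner_map_map]
  exact (Submodule.mem_orthogonal _ _).1 hv _ w'.2

/-- The moments `⟪Uⁱ v, Uʲ v⟫` of a linear isometry are those of a positive atomic measure on the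
unit circle. -/
theorem LinearIsometry.exists_atomic_moments (U : V →ₗᵢ[ℂ] V) (v : V) :
    ∃ (S : Finset ℂ) (a : ℂ → ℝ), (∀ z ∈ S, ‖z‖ = 1) ∧ (∀ z ∈ S, 0 < a z) ∧
      ∀ i j : ℕ, inner ℂ ((U.toLinearMap ^ i) v) ((U.toLinearMap ^ j) v) =
        ∑ z ∈ S, (a z : ℂ) * (starRingEnd ℂ (z ^ i) * z ^ j) := by
  have hv : v ∈ ⨆ z : ℂ, Module.End.eigenspace (U.toLinearMap : Module.End ℂ V) z := by
    rw [U.isSemisimple.iSup_eigenspace_eq_top]; trivial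
  obtain ⟨e, he, hev⟩ := (Submodule.mem_iSup_iff_exists_finsupp _ _).1 hv
  have heU : ∀ z, U (e z) = z • e z := fun z => Module.End.mem_eigenspace_iff.1 (he z)
  have hpow : ∀ z (i : ℕ), (U.toLinearMap ^ i) (e z) = z ^ i • e z := fun z i => by
    induction i with
    | zero => simp
    | succ k ih =>
      rw [pow_succ', Module.End.mul_apply, ih, map_smul, LinearIsometry.coe_toLinearMap, heU,
        smul_smul, pow_succ]
  have hnorm : ∀ z ∈ e.support, ‖z‖ = 1 := fun z hz => by
    have h1 := U.norm_map (e z)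
    rw [heU, norm_smul] at h1
    have : ‖e z‖ ≠ 0 := norm_ne_zero_iff.2 (Finsupp.mem_support_iff.1 hz)
    exact mul_right_cancel₀ this (by rw [h1, one_mul])
  have horth : ∀ z ∈ e.support, ∀ z' ∈ e.support, z ≠ z' → inner ℂ (e z) (e z') = 0 := by
    intro z hz z' hz' hne
    have h1 := U.inner_map_map (e z) (e z')
    rw [heU, heU, inner_smul_left, inner_smul_right] at h1
    by_contra h0
    rw [← mul_assoc] at h1
    have h2 : starRingEnd ℂ z * z' = 1 := mul_right_cancel₀ h0 (by rw [h1, one_mul])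
    apply hne
    have h3 : z * starRingEnd ℂ z = 1 := by
      rw [Complex.mul_conj, Complex.normSq_eq_norm_sq, hnorm z hz]; simp
    calc z = z * (starRingEnd ℂ z * z') := by rw [h2, mul_one]
      _ = z' := by rw [← mul_assoc, h3, one_mul]
  refine ⟨e.support, fun z => ‖e z‖ ^ 2, hnorm, fun z hz => ?_, fun i j => ?_⟩
  · have : ‖e z‖ ≠ 0 := norm_ne_zero_iff.2 (Finsupp.mem_support_iff.1 hz)
    positivity
  · rw [← hev, Finsupp.sum, map_sum, map_sum, sum_inner]
    refine Finset.sum_congr rfl fun z hz => ?_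
    rw [inner_sum, Finset.sum_eq_single_of_mem z hz]
    · rw [hpow, hpow, inner_smul_left, inner_smul_right, inner_self_eq_norm_sq_to_K]
      push_cast
      simp only [coe_algebraMap]
      ring
    · intro z' hz' hne
      rw [hpow, hpow, inner_smul_left, inner_smul_right, horth z hz z' hz' hne.symm]
      simp

end LinearAlgebra
open scoped MatrixOrder in
/-- A positive semidefinite Toeplitz matrix is the moment matrix of a positive measure with finite
support. -/
theorem exists_atomic_of_posSemidef_Ty {Kc : ℕ} {y : ℤ → ℂ} (hT : (Ty Kc y).PosSemidef) :
    ∃ (S : Finset ℂ) (a : ℂ → ℝ), (∀ z ∈ S, ‖z‖ = 1) ∧ (∀ z ∈ S, 0 < a z) ∧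
      ∀ i j : Fin (Kc + 1), y ((j : ℤ) - (i : ℤ)) =
        ∑ z ∈ S, (a z : ℂ) * (starRingEnd ℂ (z ^ (i : ℕ)) * z ^ (j : ℕ)) := by
  obtain ⟨B, hB⟩ := CStarAlgebra.nonneg_iff_eq_star_mul_self.1 hT.nonneg
  let u : Fin (Kc + 1) → EuclideanSpace ℂ (Fin (Kc + 1)) := fun j => WithLp.toLp 2 fun k => B k j
  have hu : ∀ i j, inner ℂ (u i) (u j) = y ((j : ℤ) - (i : ℤ)) := fun i j => by
    have : Ty Kc y i j = (star B * B) i j := by rw [← hB]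
    rw [Ty, Matrix.of_apply] at this
    rw [this, Matrix.mul_apply]
    simp [u, PiLp.inner_apply, Matrix.star_apply, mul_comm]
  obtain ⟨U, hU⟩ := exists_linearIsometry_of_inner_eq (fun i : Fin Kc => u i.castSucc)
    (fun i : Fin Kc => u i.succ) (fun i j => by
      rw [hu, hu]; congr 1; push_cast [Fin.val_castSucc, Fin.val_succ]; ring)
  have hpow : ∀ i : Fin (Kc + 1), (U.toLinearMap ^ (i : ℕ)) (u 0) = u i := by
    intro i
    induction i using Fin.induction with
    | zero => simp
    | succ i ih =>
      rw [Fin.val_castSucc] at ih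
      rw [Fin.val_succ, pow_succ', Module.End.mul_apply, ih]
      exact hU i
  obtain ⟨S, a, hS, ha, h⟩ := U.exists_atomic_moments (u 0)
  refine ⟨S, a, hS, ha, fun i j => ?_⟩
  rw [← h, hpow, hpow, hu]

theorem fourier_neg_sub_eq (x : Circle2pi) (i j : ℕ) :
    fourier (-((j : ℤ) - (i : ℤ))) x =
      starRingEnd ℂ (fourier (-1) x ^ i) * fourier (-1) x ^ j := by
  have h : ∀ n : ℕ, fourier (-1) x ^ n = fourier (-(n : ℤ)) x := fun n => by
    induction n with
    | zero => simp
    | succ k ih => rw [pow_succ, ih, ← fourier_add]; congr 1; push_cast; ring_nf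
  rw [h, h, ← fourier_neg, neg_neg, ← fourier_add]
  congr 1; ring_nf

theorem fourier_neg_one_injective : Function.Injective fun x : Circle2pi => fourier (-1) x := by
  intro x x' h
  simp only [fourier_neg, fourier_one] at h
  exact AddCircle.injective_toCircle (by positivity)
    (Subtype.ext ((starRingEnd ℂ).injective h))

theorem exists_fourier_neg_one_eq {z : ℂ} (hz : ‖z‖ = 1) :
    ∃ x : Circle2pi, fourier (-1) x = z := by
  have hT : 2 * π ≠ 0 := by positivity
  obtain ⟨x, hx⟩ := (AddCircle.homeomorphCircle hT).surjective
    ⟨starRingEnd ℂ z, by simp [Submonoid.unitSphere, hz]⟩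
  refine ⟨x, ?_⟩
  rw [AddCircle.homeomorphCircle_apply] at hx
  rw [fourier_neg, fourier_one, hx]
  simp

theorem exists_fin_sub_eq {n : ℕ} {k : ℤ} (hk : |k| ≤ (n : ℤ)) :
    ∃ i j : Fin (n + 1), k = (j : ℤ) - (i : ℤ) := by
  rw [abs_le] at hk
  rcases le_total 0 k with h | h
  · exact ⟨0, ⟨k.toNat, by lia⟩, by simp [h]⟩
  · exact ⟨⟨(-k).toNat, by lia⟩, 0, by simp [h]⟩

/-- Carathéodory–Toeplitz: data with positive semidefinite Toeplitz matrix are the Fourier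
coefficients of a positive measure with finite support. -/
theorem exists_atomic_fourier_of_posSemidef_Ty {Kc : ℕ} {y : ℤ → ℂ}
    (hT : (Ty Kc y).PosSemidef) :
    ∃ (S : Finset Circle2pi) (a : Circle2pi → ℝ), (∀ x ∈ S, 0 < a x) ∧
      ∀ k : ℤ, |k| ≤ (Kc : ℤ) → y k = ∑ x ∈ S, (a x : ℂ) * fourier (-k) x := by
  classical
  obtain ⟨S, a, hS, ha, h⟩ := exists_atomic_of_posSemidef_Ty hT
  choose! g hg using fun (z : ℂ) (hz : ‖z‖ = 1) => exists_fourier_neg_one_eq hz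
  have hinj : Set.InjOn g S := fun z hz z' hz' he => by
    rw [← hg z (hS z hz), ← hg z' (hS z' hz'), he]
  refine ⟨S.image g, fun x => a (fourier (-1) x), fun x hx => ?_, fun k hk => ?_⟩
  · obtain ⟨z, hz, rfl⟩ := Finset.mem_image.1 hx
    simpa only [hg z (hS z hz)] using ha z hz
  · obtain ⟨i, j, rfl⟩ := exists_fin_sub_eq hk
    rw [h, Finset.sum_image hinj]
    refine Finset.sum_congr rfl fun z hz => ?_
    simp only [fourier_neg_sub_eq, hg z (hS z hz)]

/-- The rows of a rectangular Vandermonde matrix with distinct nodes, scaled by nonzero weights,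
are linearly independent if there are at least as many columns as rows. -/
theorem linearIndependent_smul_pow {ι : Type*} [Fintype ι] {m : ℕ} {v b : ι → ℂ}
    (hv : Function.Injective v) (hb : ∀ i, b i ≠ 0) (hm : Fintype.card ι ≤ m) :
    LinearIndependent ℂ fun (i : ι) (j : Fin m) => b i * v i ^ (j : ℕ) := by
  classical
  rw [Fintype.linearIndependent_iff]
  intro c hc i
  have hc' : ∀ j : Fin m, ∑ s, c s * (b s * v s ^ (j : ℕ)) = 0 := fun j => by
    simpa using congrFun hc j
  set L := Lagrange.basis Finset.univ v i with hL
  have hdeg : L.natDegree < m := by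
    have h1 := Lagrange.natDegree_basis (s := Finset.univ) hv.injOn (Finset.mem_univ i)
    have h2 : 0 < Fintype.card ι := Fintype.card_pos_iff.2 ⟨i⟩
    rw [hL, h1, Finset.card_univ]
    lia
  have hsum : ∑ s, c s * b s * L.eval (v s) = 0 := by
    simp_rw [Polynomial.eval_eq_sum_range' hdeg, Finset.mul_sum]
    rw [Finset.sum_comm, ← Fin.sum_univ_eq_sum_range
      (fun j => ∑ s, c s * b s * (L.coeff j * v s ^ j))]
    refine Finset.sum_eq_zero fun j _ => ?_
    rw [← mul_zero (L.coeff j), ← hc' j, Finset.mul_sum]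
    exact Finset.sum_congr rfl fun s _ => by ring
  rw [Finset.sum_eq_single_of_mem i (Finset.mem_univ i)] at hsum
  · rw [hL, Lagrange.eval_basis_self hv.injOn (Finset.mem_univ i), mul_one] at hsum
    exact (mul_eq_zero.1 hsum).resolve_right (hb i)
  · intro s _ hs
    rw [hL, Lagrange.eval_basis_of_ne hs.symm (Finset.mem_univ s), mul_zero]

/-- The rank of a singular Toeplitz moment matrix of a positive measure with finite support is the
number of atoms. -/
theorem card_eq_rank_Ty {Kc : ℕ} {y : ℤ → ℂ} {S : Finset Circle2pi} {a : Circle2pi → ℝ}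
    (ha : ∀ x ∈ S, 0 < a x)
    (hy : ∀ k : ℤ, |k| ≤ (Kc : ℤ) → y k = ∑ x ∈ S, (a x : ℂ) * fourier (-k) x)
    (hr : (Ty Kc y).rank ≤ Kc) : S.card = (Ty Kc y).rank := by
  classical
  let W : Matrix S (Fin (Kc + 1)) ℂ :=
    Matrix.of fun x j => ((√(a x) : ℝ) : ℂ) * fourier (-1) (x : Circle2pi) ^ (j : ℕ)
  have hW : Ty Kc y = Wᴴ * W := by
    ext i j
    have hi := i.is_le
    have hj := j.is_le
    rw [Ty, Matrix.of_apply, hy _ (by rw [abs_le]; constructor <;> lia), Matrix.mul_apply,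
      ← Finset.sum_coe_sort]
    refine Finset.sum_congr rfl fun x _ => ?_
    have hs : ((√(a x) : ℝ) : ℂ) * ((√(a x) : ℝ) : ℂ) = (a x : ℂ) := by
      rw [← Complex.ofReal_mul, Real.mul_self_sqrt (ha x x.2).le]
    rw [fourier_neg_sub_eq, ← hs]
    simp only [W, Matrix.conjTranspose_apply, Matrix.of_apply, star_mul', RCLike.star_def,
      Complex.conj_ofReal]
    ring
  have hindep : ∀ S' ⊆ S, S'.card ≤ Kc + 1 → LinearIndependent ℂ
      fun (x : S') (j : Fin (Kc + 1)) =>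
        ((√(a x) : ℝ) : ℂ) * fourier (-1) (x : Circle2pi) ^ (j : ℕ) := fun S' hS' hcard =>
    linearIndependent_smul_pow (fourier_neg_one_injective.comp Subtype.val_injective)
      (fun x => Complex.ofReal_ne_zero.2 (Real.sqrt_pos.2 (ha x (hS' x.2))).ne')
      (by simpa using hcard)
  rw [hW, Matrix.rank_conjTranspose_mul_self] at hr ⊢
  rcases le_total S.card (Kc + 1) with hc | hc
  · have h := (hindep S subset_rfl hc).rank_matrix (M := W)
    simpa using h.symm
  · obtain ⟨S', hS', hcard⟩ := Finset.exists_subset_card_eq hc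
    have h := (hindep S' hS' hcard.le).rank_matrix
      (M := W.submatrix (fun x : S' => (⟨x, hS' x.2⟩ : S)) id)
    have h2 := W.rank_submatrix_le (fun x : S' => (⟨x, hS' x.2⟩ : S)) (Equiv.refl _)
    rw [Fintype.card_coe] at h
    simp only [Equiv.coe_refl] at h2
    lia

/-- Moments of order at most `n` determine the integrals of products of polynomials of degree at
most `n`. -/
theorem integral_conj_eval_mul_eval {n : ℕ} {S : Finset Circle2pi} {a : Circle2pi → ℝ}
    {μ : Measure Circle2pi} [IsFiniteMeasure μ]
    (h : ∀ k : ℤ, |k| ≤ (n : ℤ) → ∫ t, fourier (-k) t ∂μ = ∑ x ∈ S, (a x : ℂ) * fourier (-k) x)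
    {p q : Polynomial ℂ} (hp : p.natDegree ≤ n) (hq : q.natDegree ≤ n) :
    ∫ t, starRingEnd ℂ (q.eval (fourier (-1) t)) * p.eval (fourier (-1) t) ∂μ =
      ∑ x ∈ S, (a x : ℂ) *
        (starRingEnd ℂ (q.eval (fourier (-1) x)) * p.eval (fourier (-1) x)) := by
  have hpt : ∀ t : Circle2pi,
      starRingEnd ℂ (q.eval (fourier (-1) t)) * p.eval (fourier (-1) t) =
        ∑ i ∈ Finset.range (n + 1), ∑ j ∈ Finset.range (n + 1),
          starRingEnd ℂ (q.coeff i) * p.coeff j * fourier (-((j : ℤ) - (i : ℤ))) t := fun t => by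
    rw [Polynomial.eval_eq_sum_range' (Nat.lt_succ_of_le hp),
      Polynomial.eval_eq_sum_range' (Nat.lt_succ_of_le hq), map_sum, Finset.sum_mul_sum]
    refine Finset.sum_congr rfl fun i _ => Finset.sum_congr rfl fun j _ => ?_
    rw [fourier_neg_sub_eq, map_mul]
    ring
  have hint : ∀ (c : ℂ) (k : ℤ), Integrable (fun t : Circle2pi => c * fourier k t) μ :=
    fun c k => (continuous_const.mul (fourier k).continuous).integrable_of_hasCompactSupport
      (HasCompactSupport.of_compactSpace _)
  simp_rw [hpt, Finset.mul_sum]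
  rw [integral_finsetSum _ fun i _ => integrable_finsetSum _ fun j _ => hint _ _,
    Finset.sum_comm]
  refine Finset.sum_congr rfl fun i hi => ?_
  rw [integral_finsetSum _ fun j _ => hint _ _, Finset.sum_comm]
  refine Finset.sum_congr rfl fun j hj => ?_
  rw [Finset.mem_range] at hi hj
  rw [integral_const_mul, h _ (by rw [abs_le]; constructor <;> lia), Finset.mul_sum]
  exact Finset.sum_congr rfl fun x _ => by ring

/-- A positive measure with few atoms is determined, among positive measures, by its low order
Fourier coefficients. -/
theorem eq_sum_dirac_of_fourier_eq {n : ℕ} {S : Finset Circle2pi} {a : Circle2pi → ℝ}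
    (hS : S.card ≤ n) {μ : Measure Circle2pi} [IsFiniteMeasure μ]
    (h : ∀ k : ℤ, |k| ≤ (n : ℤ) → ∫ t, fourier (-k) t ∂μ = ∑ x ∈ S, (a x : ℂ) * fourier (-k) x) :
    μ = ∑ x ∈ S, ENNReal.ofReal (a x) • Measure.dirac x := by
  classical
  let e : Circle2pi → ℂ := fun x => fourier (-1) x
  have he : Function.Injective e := fourier_neg_one_injective
  have hec : Continuous e := (fourier (-1)).continuous
  set P := Lagrange.nodal S e with hP
  have hPdeg : P.natDegree ≤ n := by rw [hP, Lagrange.natDegree_nodal]; exact hS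
  have hPc : Continuous fun t => P.eval (e t) := P.continuous.comp hec
  have hnull : μ (S : Set Circle2pi)ᶜ = 0 := by
    have h0 := integral_conj_eval_mul_eval h hPdeg hPdeg
    rw [Finset.sum_eq_zero fun x hx => by
      rw [hP, show (fourier (-1) x : ℂ) = e x from rfl, Lagrange.eval_nodal_at_node hx]; simp] at h0
    have h1 : ∫ t, ‖P.eval (e t)‖ ^ 2 ∂μ = 0 := by
      rw [← Complex.ofReal_eq_zero, ← integral_complex_ofReal, ← h0]
      refine integral_congr_ae (.of_forall fun t => ?_)
      simp only [e, RCLike.conj_mul]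
      push_cast
      rfl
    have hPi : Integrable (fun t => ‖P.eval (e t)‖ ^ 2) μ :=
      (hPc.norm.pow 2).integrable_of_hasCompactSupport (HasCompactSupport.of_compactSpace _)
    rw [integral_eq_zero_iff_of_nonneg (fun t => sq_nonneg _) hPi] at h1
    refine measure_mono_null (fun t ht => ?_) (ae_iff.1 h1)
    simp only [Set.mem_ofPred_eq, Pi.zero_apply, pow_eq_zero_iff two_ne_zero, norm_eq_zero]
    rw [hP, Lagrange.eval_nodal, Finset.prod_eq_zero_iff]
    rintro ⟨x, hx, hxt⟩
    exact ht (he (sub_eq_zero.1 hxt) ▸ hx)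
  have hsum : μ = ∑ x ∈ S, μ {x} • Measure.dirac x := by
    ext A hA
    have h1 : μ A = μ (A ∩ S) := by
      rw [← measure_inter_add_sdiff A S.measurableSet]
      rw [measure_mono_null (Set.sdiff_subset_compl A _) hnull, add_zero]
    have h2 : A ∩ S = ((S.filter (· ∈ A) : Finset Circle2pi) : Set Circle2pi) := by
      ext x; simp [and_comm]
    rw [h1, h2, ← sum_measure_singleton, Finset.sum_filter, Measure.finsetSum_apply]
    refine Finset.sum_congr rfl fun x _ => ?_
    rw [Measure.smul_apply, Measure.dirac_apply' _ hA, Set.indicator_apply]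
    split_ifs <;> simp
  have hint : ∀ p : Polynomial ℂ,
      ∫ t, p.eval (e t) ∂μ = ∑ x ∈ S, (μ.real {x} : ℂ) * p.eval (e x) := fun p => by
    have hpc : Continuous fun t => p.eval (e t) := p.continuous.comp hec
    conv_lhs => rw [hsum]
    rw [integral_finsetSum_measure fun x _ =>
      ((hpc.integrable_of_hasCompactSupport (HasCompactSupport.of_compactSpace _)).smul_measure
        (measure_ne_top _ _))]
    refine Finset.sum_congr rfl fun x _ => ?_
    rw [integral_smul_measure, integral_dirac, measureReal_def, Complex.real_smul]
  conv_lhs => rw [hsum]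
  refine Finset.sum_congr rfl fun x hx => ?_
  set L := Lagrange.basis S e x with hL
  have hLdeg : L.natDegree ≤ n := by
    rw [hL, Lagrange.natDegree_basis he.injOn hx]; lia
  have hval : ∀ b : Circle2pi → ℂ, ∑ s ∈ S, b s * L.eval (e s) = b x := fun b => by
    rw [Finset.sum_eq_single_of_mem x hx, hL, Lagrange.eval_basis_self he.injOn hx, mul_one]
    intro s hs hne
    rw [Lagrange.eval_basis_of_ne hne.symm hs, mul_zero]
  have hmom := integral_conj_eval_mul_eval h hLdeg (q := 1) (by simp)
  simp only [Polynomial.eval_one, map_one, one_mul] at hmom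
  have hmom' : (μ.real {x} : ℂ) = a x := by
    rw [← hval fun s => (μ.real {s} : ℂ), ← hint, ← hval fun s => (a s : ℂ)]
    exact hmom
  rw [← Complex.ofReal_injective hmom', measureReal_def, ENNReal.ofReal_toReal (measure_ne_top _ _)]

theorem MeasureTheory.Measure.toJordanDecomposition_toSignedMeasure {α : Type*}
    [MeasurableSpace α] (μ : Measure α) [IsFiniteMeasure μ] :
    μ.toSignedMeasure.toJordanDecomposition =
      ⟨μ, 0, Measure.MutuallySingular.zero_right⟩ :=
  SignedMeasure.toJordanDecomposition_eq (by simp [JordanDecomposition.toSignedMeasure])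

theorem sFourierCoeff_toSignedMeasure (μ : Measure Circle2pi) [IsFiniteMeasure μ] (k : ℤ) :
    sFourierCoeff μ.toSignedMeasure k = ∫ t, fourier (-k) t ∂μ := by
  simp [sFourierCoeff, μ.toJordanDecomposition_toSignedMeasure]

theorem sFourierCoeff_zero (w : SignedMeasure Circle2pi) :
    sFourierCoeff w 0 = ((w.toJordanDecomposition.posPart.real Set.univ -
      w.toJordanDecomposition.negPart.real Set.univ : ℝ) : ℂ) := by
  simp [sFourierCoeff]

theorem tvNorm_neg (w : SignedMeasure Circle2pi) : tvNorm (-w) = tvNorm w := by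
  rw [tvNorm, SignedMeasure.totalVariation_neg, tvNorm]

theorem sFourierCoeff_neg (w : SignedMeasure Circle2pi) (k : ℤ) :
    sFourierCoeff (-w) k = -sFourierCoeff w k := by
  simp [sFourierCoeff, SignedMeasure.toJordanDecomposition_neg]

theorem Feasible.neg {Kc : ℕ} {y : ℤ → ℂ} {w : SignedMeasure Circle2pi} (h : Feasible Kc y w) :
    Feasible Kc (-y) (-w) := fun k hk => by
  rw [sFourierCoeff_neg, h k hk, Pi.neg_apply]

theorem IsBPCSolution.neg {Kc : ℕ} {y : ℤ → ℂ} {w : SignedMeasure Circle2pi}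
    (h : IsBPCSolution Kc y w) : IsBPCSolution Kc (-y) (-w) := by
  refine ⟨h.1.neg, fun v hv => ?_⟩
  rw [tvNorm_neg, ← tvNorm_neg v]
  exact h.2 _ (by simpa using hv.neg)

theorem Ty_neg (Kc : ℕ) (y : ℤ → ℂ) : Ty Kc (-y) = -Ty Kc y := rfl

theorem Matrix.rank_neg {m n R : Type*} [Fintype n] [CommRing R] (A : Matrix m n R) :
    (-A).rank = A.rank := by
  rw [Matrix.rank, Matrix.rank, show (-A).mulVecLin = -A.mulVecLin by ext; simp,
    LinearMap.range_neg]

/-- A feasible positive measure is a solution, and every solution is then a positive measure. -/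
theorem isBPCSolution_toSignedMeasure {Kc : ℕ} {y : ℤ → ℂ} {μ : Measure Circle2pi}
    [IsFiniteMeasure μ] (hμ : Feasible Kc y μ.toSignedMeasure) :
    IsBPCSolution Kc y μ.toSignedMeasure ∧
      ∀ w, IsBPCSolution Kc y w →
        w = w.toJordanDecomposition.posPart.toSignedMeasure := by
  have htv : tvNorm μ.toSignedMeasure = μ.real Set.univ := by
    simp [tvNorm_eq, μ.toJordanDecomposition_toSignedMeasure]
  have hmass : ∀ v, Feasible Kc y v → v.toJordanDecomposition.posPart.real Set.univ -
      v.toJordanDecomposition.negPart.real Set.univ = μ.real Set.univ := fun v hv => by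
    have h1 := (hv 0 (by simp)).trans (hμ 0 (by simp)).symm
    rw [sFourierCoeff_zero, sFourierCoeff_zero] at h1
    simpa [μ.toJordanDecomposition_toSignedMeasure] using Complex.ofReal_injective h1
  refine ⟨⟨hμ, fun v hv => ?_⟩, fun w hw => ?_⟩
  · have h1 := hmass v hv
    have h2 : 0 ≤ v.toJordanDecomposition.negPart.real Set.univ := measureReal_nonneg
    rw [htv, tvNorm_eq]
    linarith
  · have h1 := hmass w hw.1
    have h2 := hw.2 _ hμ
    rw [htv, tvNorm_eq] at h2
    have h3 : w.toJordanDecomposition.negPart = 0 := by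
      rw [← Measure.measure_univ_eq_zero, ← measureReal_eq_zero_iff]
      exact le_antisymm (by linarith) measureReal_nonneg
    conv_lhs => rw [← w.toSignedMeasure_toJordanDecomposition]
    rw [JordanDecomposition.toSignedMeasure]
    simp [h3]

theorem toSignedMeasure_sum_smul_dirac {ι : Type*} [Fintype ι] (x : ι → Circle2pi) {a : ι → ℝ}
    (ha : ∀ i, 0 ≤ a i) {μ : Measure Circle2pi} [IsFiniteMeasure μ]
    (hμ : μ = ∑ i, ENNReal.ofReal (a i) • Measure.dirac (x i)) :
    μ.toSignedMeasure = ∑ i, a i • diracSM (x i) := by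
  ext A hA
  have h1 : (∑ i, a i • diracSM (x i)) A = ∑ i, (a i • diracSM (x i)) A :=
    map_sum ((Pi.evalAddMonoidHom (fun _ : Set Circle2pi => ℝ) A).comp
      (FunLike.coeAddMonoidHom (SignedMeasure Circle2pi) _ _)) _ _
  rw [h1, Measure.toSignedMeasure_apply_measurable hA, measureReal_def, hμ,
    Measure.finsetSum_apply, ENNReal.toReal_sum fun i _ => by
      rw [Measure.smul_apply, smul_eq_mul]
      exact ENNReal.mul_ne_top ENNReal.ofReal_ne_top (measure_ne_top _ _)]
  refine Finset.sum_congr rfl fun i _ => ?_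
  rw [Measure.smul_apply, diracSM, _root_.smul_apply,
    Measure.toSignedMeasure_apply_measurable hA, smul_eq_mul, smul_eq_mul, ENNReal.toReal_mul,
    ENNReal.toReal_ofReal (ha i)]
  rfl

theorem existsUnique_solution_of_posSemidef {Kc : ℕ} {y : ℤ → ℂ} (hT : (Ty Kc y).PosSemidef)
    (hr : (Ty Kc y).rank ≤ Kc) :
    ∃ w' : SignedMeasure Circle2pi,
      IsBPCSolution Kc y w' ∧
      (∀ w : SignedMeasure Circle2pi, IsBPCSolution Kc y w → w = w') ∧
      ∃ (x : Fin ((Ty Kc y).rank) → Circle2pi) (a : Fin ((Ty Kc y).rank) → ℝ),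
        Function.Injective x ∧ (∀ i, 0 < a i) ∧ w' = ∑ i, a i • diracSM (x i) := by
  obtain ⟨S, a, ha, hy⟩ := exists_atomic_fourier_of_posSemidef_Ty hT
  have hcard := card_eq_rank_Ty ha hy hr
  set μ : Measure Circle2pi := ∑ x ∈ S, ENNReal.ofReal (a x) • Measure.dirac x with hμ
  have hfin : IsFiniteMeasure μ := ⟨by
    rw [hμ, Measure.finsetSum_apply]
    exact ENNReal.sum_lt_top.2 fun x _ => by simp⟩
  have hfeas : Feasible Kc y μ.toSignedMeasure := fun k hk => by
    rw [sFourierCoeff_toSignedMeasure, hy k hk, hμ, integral_finsetSum_measure fun x _ =>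
      (((fourier (-k)).continuous.integrable_of_hasCompactSupport
        (HasCompactSupport.of_compactSpace _)).smul_measure ENNReal.ofReal_ne_top)]
    refine Finset.sum_congr rfl fun x hx => ?_
    rw [integral_smul_measure, integral_dirac, ENNReal.toReal_ofReal (ha x hx).le,
      Complex.real_smul]
  obtain ⟨hsol, huniq⟩ := isBPCSolution_toSignedMeasure hfeas
  refine ⟨μ.toSignedMeasure, hsol, fun w hw => ?_, ?_⟩
  · have h1 := huniq w hw
    rw [h1]
    refine Measure.toSignedMeasure_congr (eq_sum_dirac_of_fourier_eq (hcard ▸ hr) fun k hk => ?_)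
    rw [← sFourierCoeff_toSignedMeasure, ← h1, hw.1 k hk, hy k hk]
  · let f : Fin (Ty Kc y).rank ≃ S := (S.equivFinOfCardEq hcard).symm
    refine ⟨fun i => f i, fun i => a (f i), Subtype.val_injective.comp f.injective,
      fun i => ha _ (f i).2, toSignedMeasure_sum_smul_dirac _ (fun i => (ha _ (f i).2).le) ?_⟩
    rw [hμ, ← Finset.sum_coe_sort]
    exact (f.sum_comp fun x : S => ENNReal.ofReal (a x) • Measure.dirac (x : Circle2pi)).symm

/-- If `T_y` is positive (resp. negative) semidefinite and rank deficient, then (BPC) has a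
unique solution, composed of exactly `rank T_y` Dirac masses with strictly positive
(resp. strictly negative) weights at pairwise distinct points. -/
theorem unique_solution_of_Ty_semidef_rank_deficient (Kc : ℕ) (hKc : 1 ≤ Kc) (y : ℤ → ℂ)
    (hsym : ∀ k : ℤ, |k| ≤ (Kc : ℤ) → y (-k) = starRingEnd ℂ (y k)) :
    ((Ty Kc y).PosSemidef → (Ty Kc y).rank ≤ Kc →
      ∃ w' : MeasureTheory.SignedMeasure Circle2pi,
        IsBPCSolution Kc y w' ∧
        (∀ w : MeasureTheory.SignedMeasure Circle2pi, IsBPCSolution Kc y w → w = w') ∧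
        ∃ (x : Fin ((Ty Kc y).rank) → Circle2pi) (a : Fin ((Ty Kc y).rank) → ℝ),
          Function.Injective x ∧ (∀ i, 0 < a i) ∧ w' = ∑ i, a i • diracSM (x i)) ∧
    ((-(Ty Kc y)).PosSemidef → (Ty Kc y).rank ≤ Kc →
      ∃ w' : MeasureTheory.SignedMeasure Circle2pi,
        IsBPCSolution Kc y w' ∧
        (∀ w : MeasureTheory.SignedMeasure Circle2pi, IsBPCSolution Kc y w → w = w') ∧
        ∃ (x : Fin ((Ty Kc y).rank) → Circle2pi) (a : Fin ((Ty Kc y).rank) → ℝ),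
          Function.Injective x ∧ (∀ i, a i < 0) ∧ w' = ∑ i, a i • diracSM (x i)) := by
  refine ⟨existsUnique_solution_of_posSemidef, fun hT hr => ?_⟩
  rw [← Ty_neg] at hT
  have hrank : (Ty Kc (-y)).rank = (Ty Kc y).rank := by rw [Ty_neg, Matrix.rank_neg]
  obtain ⟨w, hw, huniq, x, a, hx, ha, hsum⟩ :=
    existsUnique_solution_of_posSemidef hT (hrank.trans_le hr)
  refine ⟨-w, by simpa using hw.neg, fun v hv => ?_, ?_⟩
  · rw [← huniq _ hv.neg, neg_neg]
  · refine ⟨x ∘ finCongr hrank.symm, -(a ∘ finCongr hrank.symm),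
      hx.comp (finCongr hrank.symm).injective, fun i => neg_lt_zero.2 (ha _), ?_⟩
    rw [hsum, ← (finCongr hrank.symm).sum_comp, ← Finset.sum_neg_distrib]
    exact Finset.sum_congr rfl fun i _ => (neg_smul _ _).symm
end
end
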